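/- Let d ≥ 1, α > 0, r_0 > 1, 0 < ε ≤ 1 − r_0^{−α}, and let x ∈ ℝ^d with |x| ≥ r_0 + 1. Let a(x) ≥ 0 be a real number, b(x) ∈ ℝ^d, c(x) a symmetric real d×d matrix, and ν_x a Borel measure on ℝ^d with ν_x({0}) = 0, ν_x(B^c(0,1)) < ∞ and ∫_{B(0,1)} |y|² ν_x(dy) < ∞. Let w̄ : ℝ^d → ℝ be twice continuously differentiable, of the form w̄(z) = g(|z|) for some nondecreasing g : [0,∞) → ℝ, satisfying w̄(0) = 1 − r_0^{−α} − ε and w̄(z) = 1 − |z|^{−α} whenever |z| ≥ r_0. Then the function y ↦ w̄(x+y) − w̄(x) − ⟨y, ∇w̄(x)⟩ 1_{B(0,1)}(y) is ν_x-integrable and ℒw̄(x) ≥ −a(x)(1 − |x|^{−α}) + α|x|^{−α} (A(x) − (1 + α/2) C(x) + B(x)) + (α/2)((|x|+1)^{−2−α} − (2+α)(|x|+1)² (|x|−1)^{−4−α}) ∫_{B(0,1)} |y|² ν_x(dy) + ∫_{B^c(0,1)} ((1 − |y+x|^{−α}) 1_{{|y+x| > r_0}}(y) + (1 − r_0^{−α}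 − ε) 1_{{|y+x| ≤ r_0}}(y) − (1 − |x|^{−α})) ν_x(dy). -/

import Mathlib

open MeasureTheory Real
open scoped RealInnerProductSpace

/-- The integro-differential operator ℒ of the paper (evaluated at a single point `x`,
with frozen coefficients `a`, `b`, `c` and Lévy measure `ν` at that point), applied to a
twice continuously differentiable function `f`. -/
noncomputable def genL (d : ℕ) (a : ℝ) (b : EuclideanSpace ℝ (Fin d))
    (c : Matrix (Fin d) (Fin d) ℝ) (ν : Measure (EuclideanSpace ℝ (Fin d)))
    (f : EuclideanSpace ℝ (Fin d) → ℝ) (x : EuclideanSpace ℝ (Fin d)) : ℝ :=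
  -a * f x + ⟪b, gradient f x⟫
    + (1 / 2) * ∑ i, ∑ j, c i j *
        iteratedFDeriv ℝ 2 f x ![EuclideanSpace.single i 1, EuclideanSpace.single j 1]
    + ∫ y, (f (x + y) - f x
        - Set.indicator (Metric.ball (0 : EuclideanSpace ℝ (Fin d)) 1)
            (fun y => ⟪y, gradient f x⟫) y) ∂ν

/-!
Near `x` the function is the power profile `1 - ‖z‖ ^ (-α)`, so its gradient and Hessian at `x` are
explicit and the local terms of the operator are computed exactly. A jump `y` in the unit ball
stays in the region of the power profile; expanding `u ↦ u ^ (-α / 2)` to second order between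
`‖x‖ ^ 2` and `‖x + y‖ ^ 2 = ‖x‖ ^ 2 + (2 * ⟪x, y⟫ + ‖y‖ ^ 2)` leaves the positive term
`α / 2 * ‖x‖ ^ (-α - 2) * ‖y‖ ^ 2` and a quadratic remainder, which is at most of order `‖y‖ ^ 2`
because `|2 * ⟪x, y⟫ + ‖y‖ ^ 2| ≤ 2 * (‖x‖ + 1) * ‖y‖`. For a large jump the landing value is
compared pointwise with the least value the function can take there.
-/

section Taylor

lemma sq_rpow_eq_rpow_two_mul {s : ℝ} (hs : 0 ≤ s) (p : ℝ) : (s ^ 2) ^ p = s ^ (2 * p) := by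
  rw [← rpow_natCast, ← rpow_mul hs, Nat.cast_ofNat]

lemma exists_rpow_eq_taylor_two (p : ℝ) {s t : ℝ} (hs : 0 < s) (ht : 0 < t) :
    ∃ ξ ∈ Set.uIcc s t,
      t ^ p = s ^ p + p * s ^ (p - 1) * (t - s) + p * (p - 1) / 2 * ξ ^ (p - 2) * (t - s) ^ 2 := by
  rcases eq_or_ne s t with rfl | hst
  · exact ⟨s, Set.left_mem_uIcc, by ring⟩
  have hsmooth : ContDiffOn ℝ (1 + 1) (fun u : ℝ => u ^ p) (Set.uIcc s t) := fun u hu =>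
    (contDiffAt_rpow_const_of_ne ((lt_min hs ht).trans_le hu.1).ne').contDiffWithinAt
  obtain ⟨ξ, hξ, htaylor⟩ := taylor_mean_remainder_lagrange_iteratedDeriv (n := 1) hst hsmooth
  have hderiv : derivWithin (fun u : ℝ => u ^ p) (Set.uIcc s t) s = p * s ^ (p - 1) :=
    (hasDerivAt_rpow_const (Or.inl hs.ne')).hasDerivWithinAt.derivWithin
      (uniqueDiffOn_uIcc hst s Set.left_mem_uIcc)
  have hderiv₂ : iteratedDeriv 2 (fun u : ℝ => u ^ p) ξ = p * (p - 1) * ξ ^ (p - 2) := by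
    rw [iteratedDeriv_eq_iterate, iter_deriv_rpow_const]
    simp [descPochhammer_succ_right]
  refine ⟨ξ, Set.Ioo_subset_Icc_self hξ, ?_⟩
  simp only [taylorWithinEval_succ, taylor_within_zero_eval, CharP.cast_eq_zero, zero_add,
    Nat.factorial_zero, Nat.cast_one, mul_one, inv_one, pow_one, one_mul, iteratedDerivWithin_one,
    hderiv, smul_eq_mul, Nat.reduceAdd, hderiv₂, Nat.factorial_two, Nat.cast_ofNat] at htaylor
  linarith

variable {E : Type*} [NormedAddCommGroup E] [InnerProductSpace ℝ E]

-- The scalar expansion of `u ↦ u ^ (p / 2)`, applied between `‖x‖ ^ 2` and `‖x + y‖ ^ 2`.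
lemma exists_norm_add_rpow_eq_taylor_two (p : ℝ) {x y : E} (hx : x ≠ 0) (hxy : x + y ≠ 0) :
    ∃ σ ∈ Set.uIcc ‖x‖ ‖x + y‖,
      ‖x + y‖ ^ p = ‖x‖ ^ p + p / 2 * ‖x‖ ^ (p - 2) * (2 * ⟪x, y⟫ + ‖y‖ ^ 2)
        + p * (p - 2) / 8 * σ ^ (p - 4) * (2 * ⟪x, y⟫ + ‖y‖ ^ 2) ^ 2 := by
  obtain ⟨ξ, hξ, htaylor⟩ := exists_rpow_eq_taylor_two (p / 2)
    (pow_pos (norm_pos_iff.2 hx) 2) (pow_pos (norm_pos_iff.2 hxy) 2)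
  have hσ : √ξ ∈ Set.uIcc ‖x‖ ‖x + y‖ := by
    simpa only [sqrt_sq (norm_nonneg _)] using Real.sqrt_monotone.mapsTo_uIcc hξ
  have hξ₀ : 0 ≤ ξ := (le_min (sq_nonneg ‖x‖) (sq_nonneg ‖x + y‖)).trans hξ.1
  rw [← sq_sqrt hξ₀] at htaylor
  simp only [sq_rpow_eq_rpow_two_mul (norm_nonneg _), sq_rpow_eq_rpow_two_mul (sqrt_nonneg _),
    mul_sub, mul_div_cancel₀ p (two_ne_zero' ℝ), mul_one, show (2 : ℝ) * 2 = 4 by norm_num]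
    at htaylor
  refine ⟨√ξ, hσ, ?_⟩
  rw [htaylor, norm_add_sq_real]
  ring

/-- For `0 ≤ ρ < R`, a lower bound for half the second derivative of `z ↦ 1 - ‖z‖ ^ (-α)` in any
unit direction, uniformly over `R - ρ ≤ ‖z‖ ≤ R + ρ`. -/
noncomputable def smallJumpCoeff (α R ρ : ℝ) : ℝ :=
  (α / 2) * ((R + ρ) ^ (-2 - α) - (2 + α) * (R + ρ) ^ 2 * (R - ρ) ^ (-4 - α))

lemma norm_rpow_neg_sub_le {α : ℝ} (hα : 0 ≤ α) {x y : E} (hx : x ≠ 0) (hxy : x + y ≠ 0) :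
    ‖x‖ ^ (-α) - ‖x + y‖ ^ (-α) - α * ‖x‖ ^ (-α - 2) * ⟪x, y⟫
      ≤ α / 2 * ‖x‖ ^ (-α - 2) * ‖y‖ ^ 2 := by
  obtain ⟨σ, hσ, htaylor⟩ := exists_norm_add_rpow_eq_taylor_two (-α) hx hxy
  have hσ₀ : 0 ≤ σ := (le_min (norm_nonneg x) (norm_nonneg (x + y))).trans hσ.1
  have hremainder : 0 ≤ α * (α + 2) / 8 * σ ^ (-α - 4) * (2 * ⟪x, y⟫ + ‖y‖ ^ 2) ^ 2 := by
    positivity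
  linear_combination hremainder - htaylor

lemma abs_two_mul_inner_add_sq_norm_le {ρ : ℝ} {x y : E} (hy : ‖y‖ ≤ ρ) :
    |2 * ⟪x, y⟫ + ‖y‖ ^ 2| ≤ 2 * (‖x‖ + ρ) * ‖y‖ := by
  have hinner := abs_le.1 (abs_real_inner_le_norm x y)
  rw [abs_le]
  constructor <;> nlinarith [norm_nonneg y]

lemma smallJumpCoeff_mul_le {α ρ : ℝ} (hα : 0 ≤ α) {x y : E} (hy : ‖y‖ ≤ ρ) (hx : ρ < ‖x‖) :
    smallJumpCoeff α ‖x‖ ρ * ‖y‖ ^ 2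
      ≤ ‖x‖ ^ (-α) - ‖x + y‖ ^ (-α) - α * ‖x‖ ^ (-α - 2) * ⟪x, y⟫ := by
  have hρ : 0 ≤ ρ := (norm_nonneg y).trans hy
  have hx₀ : 0 < ‖x‖ := hρ.trans_lt hx
  have hxy : ‖x‖ - ρ ≤ ‖x + y‖ := by linarith [norm_sub_le_norm_add x y]
  obtain ⟨σ, hσ, htaylor⟩ := exists_norm_add_rpow_eq_taylor_two (-α) (norm_pos_iff.1 hx₀)
    (norm_pos_iff.1 ((sub_pos.2 hx).trans_le hxy))
  have hσ_ge : ‖x‖ - ρ ≤ σ := (le_min (by linarith) hxy).trans hσ.1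
  have hfirst : (‖x‖ + ρ) ^ (-2 - α) * ‖y‖ ^ 2 ≤ ‖x‖ ^ (-α - 2) * ‖y‖ ^ 2 := by
    rw [neg_sub_comm]
    gcongr ?_ * _
    exact rpow_le_rpow_of_nonpos hx₀ (by linarith) (by linarith)
  have hsecond : σ ^ (-α - 4) * (2 * ⟪x, y⟫ + ‖y‖ ^ 2) ^ 2
      ≤ (‖x‖ - ρ) ^ (-4 - α) * (2 * (‖x‖ + ρ) * ‖y‖) ^ 2 := by
    rw [show -α - 4 = -4 - α by ring]
    gcongr ?_ * ?_
    · exact rpow_le_rpow_of_nonpos (sub_pos.2 hx) hσ_ge (by linarith)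
    · exact sq_le_sq.2 ((abs_two_mul_inner_add_sq_norm_le hy).trans (le_abs_self _))
  unfold smallJumpCoeff
  linear_combination α / 2 * hfirst + α * (α + 2) / 8 * hsecond + htaylor

end Taylor

section Derivatives

variable {E : Type*} [NormedAddCommGroup E] [InnerProductSpace ℝ E]

lemma hasFDerivAt_norm_rpow_of_ne_zero (p : ℝ) {x : E} (hx : x ≠ 0) :
    HasFDerivAt (fun z : E => ‖z‖ ^ p) ((p * ‖x‖ ^ (p - 2)) • innerSL ℝ x) x := by
  have hsq := (hasStrictFDerivAt_norm_sq x).hasFDerivAt.rpow_const (p := p / 2)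
    (Or.inl (by simpa using hx))
  simp only [sq_rpow_eq_rpow_two_mul (norm_nonneg _), mul_div_cancel₀ p (two_ne_zero' ℝ),
    mul_sub, mul_one] at hsq
  convert hsq using 1
  ext v
  simp only [smul_apply, coe_innerSL_apply, smul_eq_mul, nsmul_eq_mul, Nat.cast_ofNat]
  ring

lemma iteratedFDeriv_two_norm_rpow (p : ℝ) {x : E} (hx : x ≠ 0) (u v : E) :
    iteratedFDeriv ℝ 2 (fun z : E => ‖z‖ ^ p) x ![u, v]
      = p * ‖x‖ ^ (p - 2) * ⟪u, v⟫ + p * (p - 2) * ‖x‖ ^ (p - 4) * ⟪x, u⟫ * ⟪x, v⟫ := by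
  have hfderiv : fderiv ℝ (fun z : E => ‖z‖ ^ p) =ᶠ[nhds x]
      fun z => (p * ‖z‖ ^ (p - 2)) • innerSL ℝ z := by
    filter_upwards [isOpen_ne.mem_nhds hx] with z hz
    exact (hasFDerivAt_norm_rpow_of_ne_zero p hz).fderiv
  have hfderiv₂ := ((hasFDerivAt_norm_rpow_of_ne_zero (p - 2) hx).const_mul p).smul
    (innerSL ℝ (E := E)).hasFDerivAt
  rw [iteratedFDeriv_two_apply, hfderiv.fderiv_eq.trans hfderiv₂.fderiv]
  have hinner : ∀ y z : E, (innerSL ℝ : E →L[ℝ] E →L[ℝ] ℝ) y z = ⟪y, z⟫ := fun _ _ => rfl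
  simp only [Matrix.cons_val_zero, Matrix.cons_val_one, add_apply, smul_apply,
    ContinuousLinearMap.smulRight_apply, hinner, smul_eq_mul, sub_sub,
    show (2 : ℝ) + 2 = 4 by norm_num]
  ring

end Derivatives

section LocalTerms

variable {E : Type*} [NormedAddCommGroup E] [InnerProductSpace ℝ E]

lemma inner_gradient_of_eventuallyEq_one_sub_norm_rpow [CompleteSpace E] {α : ℝ} {f : E → ℝ} {x : E}
    (hx : x ≠ 0) (hf : f =ᶠ[nhds x] fun z => 1 - ‖z‖ ^ (-α)) (v : E) :
    ⟪v, gradient f x⟫ = α * ‖x‖ ^ (-α - 2) * ⟪x, v⟫ := by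
  have hfderiv := ((hasFDerivAt_norm_rpow_of_ne_zero (-α) hx).const_sub 1).congr_of_eventuallyEq hf
  rw [inner_gradient_right, hfderiv.fderiv]
  simp

lemma iteratedFDeriv_two_of_eventuallyEq_one_sub_norm_rpow {α : ℝ} {f : E → ℝ} {x : E}
    (hx : x ≠ 0) (hf : f =ᶠ[nhds x] fun z => 1 - ‖z‖ ^ (-α)) (u v : E) :
    iteratedFDeriv ℝ 2 f x ![u, v]
      = α * ‖x‖ ^ (-α - 2) * ⟪u, v⟫ - α * (α + 2) * ‖x‖ ^ (-α - 4) * ⟪x, u⟫ * ⟪x, v⟫ := by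
  have hneg : iteratedFDeriv ℝ 2 (fun z : E => 1 - ‖z‖ ^ (-α)) x ![u, v]
      = -iteratedFDeriv ℝ 2 (fun z : E => ‖z‖ ^ (-α)) x ![u, v] := by
    have hfderiv : fderiv ℝ (fun z : E => 1 - ‖z‖ ^ (-α)) = -fderiv ℝ fun z : E => ‖z‖ ^ (-α) :=
      funext fun _ => fderiv_const_sub 1
    simp only [iteratedFDeriv_two_apply, hfderiv, fderiv_neg, neg_apply]
  rw [(hf.iteratedFDeriv ℝ 2).eq_of_nhds, hneg, iteratedFDeriv_two_norm_rpow (-α) hx]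
  ring

lemma drift_add_diffusion_of_eventuallyEq_one_sub_norm_rpow {ι : Type*} [Fintype ι]
    [DecidableEq ι] {α : ℝ} {f : EuclideanSpace ℝ ι → ℝ} {x : EuclideanSpace ℝ ι} (hx : x ≠ 0)
    (hf : f =ᶠ[nhds x] fun z => 1 - ‖z‖ ^ (-α)) (b : EuclideanSpace ℝ ι) (c : Matrix ι ι ℝ) :
    ⟪b, gradient f x⟫ + (1 / 2) * ∑ i, ∑ j, c i j *
        iteratedFDeriv ℝ 2 f x ![EuclideanSpace.single i 1, EuclideanSpace.single j 1]
      = α * ‖x‖ ^ (-α) *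
          ((1 / 2) * ‖x‖ ^ (-2 : ℝ) * c.trace
            - (1 + α / 2) * (‖x‖ ^ (-4 : ℝ) * ∑ i, ∑ j, c i j * x i * x j)
            + ‖x‖ ^ (-2 : ℝ) * ⟪x, b⟫) := by
  have hentry : ∀ i j, c i j *
      iteratedFDeriv ℝ 2 f x ![EuclideanSpace.single i 1, EuclideanSpace.single j 1]
        = α * ‖x‖ ^ (-α - 2) * (if i = j then c i j else 0)
          - α * (α + 2) * ‖x‖ ^ (-α - 4) * (c i j * x i * x j) := by
    intro i j
    rw [iteratedFDeriv_two_of_eventuallyEq_one_sub_norm_rpow hx hf]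
    simp only [EuclideanSpace.inner_single_right]
    rcases eq_or_ne i j with rfl | hij
    · simp only [PiLp.single_eq_same, ringHom_apply, mul_one, one_mul, ↓reduceIte]
      ring
    · simp only [ne_eq, hij, not_false_eq_true, PiLp.single_eq_of_ne', ringHom_apply, mul_zero,
        one_mul, zero_sub, mul_neg, ↓reduceIte, neg_inj]
      ring
  have htrace : ∑ i, ∑ j, (if i = j then c i j else 0) = c.trace := by
    simp [Matrix.trace]
  have hpow : ∀ q : ℝ, ‖x‖ ^ (-α - q) = ‖x‖ ^ (-α) * ‖x‖ ^ (-q) := fun q => by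
    rw [sub_eq_add_neg, rpow_add (norm_pos_iff.2 hx)]
  simp only [hentry, Finset.sum_sub_distrib, ← Finset.mul_sum, htrace,
    inner_gradient_of_eventuallyEq_one_sub_norm_rpow hx hf, hpow]
  ring

end LocalTerms

section PowerProfile

variable {E : Type*} [NormedAddCommGroup E] [MeasurableSpace E] {α r m M : ℝ} {w : E → ℝ}

/-- A measurable function that equals the power profile `1 - ‖z‖ ^ (-α)` for `r < ‖z‖` and takes
values in `[m, M]` for `‖z‖ ≤ r`. This is the class of test functions for which the lower bound on
`genL` holds. -/
structure HasPowerProfile (α r m M : ℝ) (w : E → ℝ) : Prop where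
  measurable : Measurable w
  eq_of_lt_norm : ∀ z, r < ‖z‖ → w z = 1 - ‖z‖ ^ (-α)
  mem_Icc_of_norm_le : ∀ z, ‖z‖ ≤ r → w z ∈ Set.Icc m M

/-- The least function with the power profile `1 - ‖z‖ ^ (-α)` for `r < ‖z‖` and values at least `m`
for `‖z‖ ≤ r`. -/
noncomputable def minimalPowerProfile {E : Type*} [NormedAddCommGroup E] (α r m : ℝ) (z : E) : ℝ :=
  Set.indicator {z : E | r < ‖z‖} (fun z => 1 - ‖z‖ ^ (-α)) z
    + Set.indicator {z : E | ‖z‖ ≤ r} (fun _ => m) z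

lemma hasPowerProfile_minimalPowerProfile [OpensMeasurableSpace E] (α r m : ℝ) :
    HasPowerProfile α r m m (minimalPowerProfile α r m : E → ℝ) where
  measurable :=
    (((measurable_norm.pow_const (-α)).const_sub 1).indicator
      (measurableSet_lt measurable_const measurable_norm)).add
      (measurable_const.indicator (measurableSet_le measurable_norm measurable_const))
  eq_of_lt_norm z hz := by simp [minimalPowerProfile, hz, hz.not_ge]
  mem_Icc_of_norm_le z hz := by simp [minimalPowerProfile, hz, hz.not_gt]

namespace HasPowerProfile

lemma of_radial_monotoneOn {g : ℝ → ℝ} (hw : Measurable w) (hg : MonotoneOn g (Set.Ici 0))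
    (hwg : ∀ z, w z = g ‖z‖) (hr : 0 ≤ r) (hout : ∀ z, r < ‖z‖ → w z = 1 - ‖z‖ ^ (-α)) :
    HasPowerProfile α r (w 0) (g r) w where
  measurable := hw
  eq_of_lt_norm := hout
  mem_Icc_of_norm_le z hz := by
    rw [hwg, hwg, norm_zero]
    exact ⟨hg Set.self_mem_Ici (norm_nonneg z) (norm_nonneg z), hg (norm_nonneg z) hr hz⟩

lemma eventuallyEq (hw : HasPowerProfile α r m M w) {x : E} (hx : r < ‖x‖) :
    w =ᶠ[nhds x] fun z => 1 - ‖z‖ ^ (-α) := by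
  filter_upwards [(isOpen_lt continuous_const continuous_norm).mem_nhds hx] with z hz
    using hw.eq_of_lt_norm z hz

lemma minimalPowerProfile_le (hw : HasPowerProfile α r m M w) (z : E) :
    minimalPowerProfile α r m z ≤ w z := by
  rcases lt_or_ge r ‖z‖ with hz | hz
  · simp [minimalPowerProfile, hz, hz.not_ge, hw.eq_of_lt_norm]
  · simpa [minimalPowerProfile, hz, hz.not_gt] using (hw.mem_Icc_of_norm_le z hz).1

lemma exists_norm_le (hw : HasPowerProfile α r m M w) (hα : 0 ≤ α) (hr : 0 < r) :
    ∃ C, ∀ z, ‖w z‖ ≤ C := by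
  refine ⟨max (1 + r ^ (-α)) (max |m| |M|), fun z => ?_⟩
  rcases lt_or_ge r ‖z‖ with hz | hz
  · have hpow : ‖z‖ ^ (-α) ≤ r ^ (-α) := rpow_le_rpow_of_nonpos hr hz.le (neg_nonpos.2 hα)
    rw [hw.eq_of_lt_norm z hz]
    refine le_max_of_le_left ((norm_sub_le _ _).trans ?_)
    rwa [norm_one, norm_of_nonneg (rpow_nonneg (norm_nonneg z) _), add_le_add_iff_left]
  · obtain ⟨hm, hM⟩ := hw.mem_Icc_of_norm_le z hz
    exact le_max_of_le_right (abs_le_max_abs_abs hm hM)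

end HasPowerProfile

lemma integrableOn_minimalPowerProfile_sub [BorelSpace E] {ν : Measure E} (hα : 0 ≤ α)
    (hr : 0 < r) (m : ℝ) (x : E) (k : ℝ) {s : Set E} (hs : ν s < ⊤) :
    IntegrableOn (fun y => minimalPowerProfile α r m (y + x) - k) s ν := by
  have hprofile : HasPowerProfile α r m m (minimalPowerProfile α r m : E → ℝ) :=
    hasPowerProfile_minimalPowerProfile α r m
  obtain ⟨C, hC⟩ := hprofile.exists_norm_le hα hr
  exact .of_bound hs
    ((hprofile.measurable.comp (measurable_add_const x)).sub_const k).aestronglyMeasurable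
    (C + ‖k‖) (.of_forall fun y => norm_sub_le_of_le (hC _) le_rfl)

end PowerProfile

section Jumps

lemma integrable_of_norm_le_on_of_bounded_compl {X F : Type*} [MeasurableSpace X]
    [NormedAddCommGroup F] {μ : Measure X} {s : Set X} (hs : MeasurableSet s) {f : X → F}
    {g : X → ℝ} (hf : AEStronglyMeasurable f μ) (hg : IntegrableOn g s μ) (hμ : μ sᶜ < ⊤) {C : ℝ}
    (hfg : ∀ y ∈ s, ‖f y‖ ≤ g y) (hfC : ∀ y ∈ sᶜ, ‖f y‖ ≤ C) : Integrable f μ := by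
  have hon : IntegrableOn f s μ := hg.mono' hf.restrict (ae_restrict_of_forall_mem hs hfg)
  have hcompl : IntegrableOn f sᶜ μ :=
    .of_bound hμ hf.restrict C (ae_restrict_of_forall_mem hs.compl hfC)
  rw [← integrableOn_univ, ← Set.union_compl_self s]
  exact hon.union hcompl

variable {E : Type*} [NormedAddCommGroup E] [InnerProductSpace ℝ E] [CompleteSpace E]

/-- The integrand of the nonlocal part of `genL`: the increment of `f` at `x`, with its linear part
removed for jumps in the open unit ball. -/
noncomputable def compensatedIncrement (f : E → ℝ) (x y : E) : ℝ :=
  f (x + y) - f x - Set.indicator (Metric.ball (0 : E) 1) (fun y => ⟪y, gradient f x⟫) y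

lemma compensatedIncrement_of_notMem_ball (f : E → ℝ) (x : E) {y : E}
    (hy : y ∉ Metric.ball (0 : E) 1) : compensatedIncrement f x y = f (x + y) - f x := by
  rw [compensatedIncrement, Set.indicator_of_notMem hy, sub_zero]

variable [MeasurableSpace E]

lemma measurable_compensatedIncrement [BorelSpace E] {f : E → ℝ} (hf : Measurable f) (x : E) :
    Measurable (compensatedIncrement f x) := by
  have hinner : Measurable fun y : E => ⟪y, gradient f x⟫ :=
    (continuous_id.inner continuous_const).measurable
  exact ((hf.comp (measurable_const_add x)).sub_const _).sub
    (hinner.indicator Metric.isOpen_ball.measurableSet)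

variable {α r m M : ℝ} {w : E → ℝ} {x : E}

namespace HasPowerProfile

lemma compensatedIncrement_mem_Icc (hw : HasPowerProfile α r m M w) (hα : 0 ≤ α) (hr : 0 < r)
    (hx : r + 1 ≤ ‖x‖) {y : E} (hy : y ∈ Metric.ball (0 : E) 1) :
    compensatedIncrement w x y ∈ Set.Icc (smallJumpCoeff α ‖x‖ 1 * ‖y‖ ^ 2)
      (α / 2 * ‖x‖ ^ (-α - 2) * ‖y‖ ^ 2) := by
  have hy₁ : ‖y‖ < 1 := mem_ball_zero_iff.1 hy
  have hxr : r < ‖x‖ := by linarith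
  have hxyr : r < ‖x + y‖ := by linarith [norm_sub_le_norm_add x y]
  have hx₀ : x ≠ 0 := norm_pos_iff.1 (hr.trans hxr)
  have hxy₀ : x + y ≠ 0 := norm_pos_iff.1 (hr.trans hxyr)
  have heq : compensatedIncrement w x y
      = ‖x‖ ^ (-α) - ‖x + y‖ ^ (-α) - α * ‖x‖ ^ (-α - 2) * ⟪x, y⟫ := by
    rw [compensatedIncrement, Set.indicator_of_mem hy, hw.eq_of_lt_norm x hxr,
      hw.eq_of_lt_norm (x + y) hxyr,
      inner_gradient_of_eventuallyEq_one_sub_norm_rpow hx₀ (hw.eventuallyEq hxr)]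
    ring
  rw [heq]
  exact ⟨smallJumpCoeff_mul_le hα hy₁.le (by linarith), norm_rpow_neg_sub_le hα hx₀ hxy₀⟩

variable [BorelSpace E] {ν : Measure E}

lemma integrable_compensatedIncrement (hw : HasPowerProfile α r m M w) (hα : 0 ≤ α) (hr : 0 < r)
    (hx : r + 1 ≤ ‖x‖) (hνfin : ν (Metric.ball (0 : E) 1)ᶜ < ⊤)
    (hνsq : IntegrableOn (fun y => ‖y‖ ^ 2) (Metric.ball (0 : E) 1) ν) :
    Integrable (compensatedIncrement w x) ν := by
  obtain ⟨C, hC⟩ := hw.exists_norm_le hα hr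
  refine integrable_of_norm_le_on_of_bounded_compl Metric.isOpen_ball.measurableSet
    (measurable_compensatedIncrement hw.measurable x).aestronglyMeasurable
    (hνsq.const_mul (max |smallJumpCoeff α ‖x‖ 1| |α / 2 * ‖x‖ ^ (-α - 2)|)) hνfin (C := C + C)
    (fun y hy => ?_) (fun y hy => ?_)
  · obtain ⟨hlower, hupper⟩ := hw.compensatedIncrement_mem_Icc hα hr hx hy
    rw [max_mul_of_nonneg _ _ (sq_nonneg ‖y‖)]
    simpa only [abs_mul, abs_sq, norm_eq_abs] using abs_le_max_abs_abs hlower hupper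
  · rw [compensatedIncrement_of_notMem_ball w x hy]
    exact norm_sub_le_of_le (hC _) (hC _)

lemma le_integral_compensatedIncrement (hw : HasPowerProfile α r m M w) (hα : 0 ≤ α) (hr : 0 < r)
    (hx : r + 1 ≤ ‖x‖) (hνfin : ν (Metric.ball (0 : E) 1)ᶜ < ⊤)
    (hνsq : IntegrableOn (fun y => ‖y‖ ^ 2) (Metric.ball (0 : E) 1) ν) :
    smallJumpCoeff α ‖x‖ 1 * ∫ y in Metric.ball (0 : E) 1, ‖y‖ ^ 2 ∂ν
        + ∫ y in (Metric.ball (0 : E) 1)ᶜ,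
            (minimalPowerProfile α r m (y + x) - (1 - ‖x‖ ^ (-α))) ∂ν
      ≤ ∫ y, compensatedIncrement w x y ∂ν := by
  have hball : MeasurableSet (Metric.ball (0 : E) 1) := Metric.isOpen_ball.measurableSet
  have hint := hw.integrable_compensatedIncrement hα hr hx hνfin hνsq
  rw [← integral_add_compl hball hint, ← integral_const_mul]
  refine add_le_add
    (setIntegral_mono_on (hνsq.const_mul _) hint.integrableOn hball fun y hy =>
      (hw.compensatedIncrement_mem_Icc hα hr hx hy).1)
    (setIntegral_mono_on (integrableOn_minimalPowerProfile_sub hα hr m x _ hνfin)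
      hint.integrableOn hball.compl fun y hy => ?_)
  rw [compensatedIncrement_of_notMem_ball w x hy, hw.eq_of_lt_norm x (by linarith), add_comm y x]
  exact sub_le_sub_right (hw.minimalPowerProfile_le _) _

end HasPowerProfile

end Jumps

theorem stmt_6_general {d : ℕ} {α r m M : ℝ} (hα : 0 ≤ α) (hr : 0 < r)
    {x : EuclideanSpace ℝ (Fin d)} (hx : r + 1 ≤ ‖x‖) (a : ℝ) (b : EuclideanSpace ℝ (Fin d))
    (c : Matrix (Fin d) (Fin d) ℝ) {ν : Measure (EuclideanSpace ℝ (Fin d))}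
    (hνfin : ν (Metric.ball (0 : EuclideanSpace ℝ (Fin d)) 1)ᶜ < ⊤)
    (hνsq : IntegrableOn (fun y => ‖y‖ ^ 2) (Metric.ball (0 : EuclideanSpace ℝ (Fin d)) 1) ν)
    {w : EuclideanSpace ℝ (Fin d) → ℝ} (hw : HasPowerProfile α r m M w) :
    Integrable (compensatedIncrement w x) ν ∧
    -a * (1 - ‖x‖ ^ (-α))
        + α * ‖x‖ ^ (-α) *
            ((1 / 2) * ‖x‖ ^ (-2 : ℝ) * c.trace
              - (1 + α / 2) * (‖x‖ ^ (-4 : ℝ) * ∑ i, ∑ j, c i j * x i * x j)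
              + ‖x‖ ^ (-2 : ℝ) * ⟪x, b⟫)
        + smallJumpCoeff α ‖x‖ 1 *
            ∫ y in Metric.ball (0 : EuclideanSpace ℝ (Fin d)) 1, ‖y‖ ^ 2 ∂ν
        + ∫ y in (Metric.ball (0 : EuclideanSpace ℝ (Fin d)) 1)ᶜ,
            (minimalPowerProfile α r m (y + x) - (1 - ‖x‖ ^ (-α))) ∂ν
      ≤ genL d a b c ν w x := by
  have hxr : r < ‖x‖ := by linarith
  have hlocal := drift_add_diffusion_of_eventuallyEq_one_sub_norm_rpow
    (norm_pos_iff.1 (hr.trans hxr)) (hw.eventuallyEq hxr) b c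
  have hjump := hw.le_integral_compensatedIncrement hα hr hx hνfin hνsq
  refine ⟨hw.integrable_compensatedIncrement hα hr hx hνfin hνsq, ?_⟩
  rw [← hlocal, ← hw.eq_of_lt_norm x hxr, genL]
  rw [← hw.eq_of_lt_norm x hxr] at hjump
  simp only [compensatedIncrement] at hjump
  linarith

theorem stmt_6 (d : ℕ) (hd : 1 ≤ d) (α r0 ε : ℝ) (hα : 0 < α) (hr0 : 1 < r0)
    (hε : 0 < ε) (hε1 : ε ≤ 1 - r0 ^ (-α))
    (x : EuclideanSpace ℝ (Fin d)) (hx : r0 + 1 ≤ ‖x‖)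
    (a : ℝ) (ha : 0 ≤ a) (b : EuclideanSpace ℝ (Fin d))
    (c : Matrix (Fin d) (Fin d) ℝ) (hc : c.IsSymm)
    (ν : Measure (EuclideanSpace ℝ (Fin d)))
    (hν0 : ν {0} = 0)
    (hνfin : ν ((Metric.ball (0 : EuclideanSpace ℝ (Fin d)) 1)ᶜ) < ⊤)
    (hνsq : IntegrableOn (fun y => ‖y‖ ^ 2)
      (Metric.ball (0 : EuclideanSpace ℝ (Fin d)) 1) ν)
    (w : EuclideanSpace ℝ (Fin d) → ℝ) (hw : ContDiff ℝ 2 w)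
    (g : ℝ → ℝ) (hg : MonotoneOn g (Set.Ici 0)) (hwg : ∀ z, w z = g ‖z‖)
    (hw0 : w 0 = 1 - r0 ^ (-α) - ε)
    (hwpow : ∀ z : EuclideanSpace ℝ (Fin d), r0 ≤ ‖z‖ → w z = 1 - ‖z‖ ^ (-α)) :
    Integrable (fun y => w (x + y) - w x
      - Set.indicator (Metric.ball (0 : EuclideanSpace ℝ (Fin d)) 1)
          (fun y => ⟪y, gradient w x⟫) y) ν ∧
    -a * (1 - ‖x‖ ^ (-α))
        + α * ‖x‖ ^ (-α) *
            ((1 / 2) * ‖x‖ ^ (-2 : ℝ) * c.trace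
              - (1 + α / 2) * (‖x‖ ^ (-4 : ℝ) * ∑ i, ∑ j, c i j * x i * x j)
              + ‖x‖ ^ (-2 : ℝ) * ⟪x, b⟫)
        + (α / 2) * ((‖x‖ + 1) ^ (-2 - α)
            - (2 + α) * (‖x‖ + 1) ^ 2 * (‖x‖ - 1) ^ (-4 - α)) *
            ∫ y in Metric.ball (0 : EuclideanSpace ℝ (Fin d)) 1, ‖y‖ ^ 2 ∂ν
        + ∫ y in (Metric.ball (0 : EuclideanSpace ℝ (Fin d)) 1)ᶜ,
            (Set.indicator {y : EuclideanSpace ℝ (Fin d) | r0 < ‖y + x‖}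
                (fun y => 1 - ‖y + x‖ ^ (-α)) y
              + Set.indicator {y : EuclideanSpace ℝ (Fin d) | ‖y + x‖ ≤ r0}
                  (fun _ => 1 - r0 ^ (-α) - ε) y
              - (1 - ‖x‖ ^ (-α))) ∂ν
      ≤ genL d a b c ν w x := by
  have hprofile : HasPowerProfile α r0 (1 - r0 ^ (-α) - ε) (g r0) w := hw0 ▸
    .of_radial_monotoneOn hw.continuous.measurable hg hwg (by linarith) fun z hz => hwpow z hz.le
  exact stmt_6_general hα.le (by linarith) hx a b c hνfin hνsq hprofile
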